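/- For every t ∈ {1,…,n}, the degree of the polynomial det(A) in the variable X_t is at most k − 1. -/

import Mathlib

/-!
In the Leibniz expansion of `det A`, each term is a signed product with one factor from every
column. Each entry of `A` is a coefficient of a product of distinct factors `x - X_s`, hence has
degree at most one in `X_t` (`degreeOf_coeff_prod_le`), while the last column is constantly `1`
because every `f_i` is monic of degree `k - 1`. So each term has degree at most `k - 1` in `X_t`.
-/

open Polynomial MvPolynomial

/-- The coefficient matrix `A = (a_{i,j})` where
`f_i(x) = ∏_{t ∈ Z i} (x - X_t) = ∑_{j=1}^k a_{i,j} x^{j-1}`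
(with `0`-based index `j`, `a i j` is the coefficient of `x^j` in `f i`). -/
noncomputable def coeffMatrix (F : Type*) [Field F] (n k : ℕ)
    (Z : Fin k → Finset (Fin n)) : Matrix (Fin k) (Fin k) (MvPolynomial (Fin n) F) :=
  Matrix.of fun i j =>
    (∏ t ∈ Z i, (Polynomial.X - Polynomial.C (MvPolynomial.X t) :
        Polynomial (MvPolynomial (Fin n) F))).coeff (j : ℕ)

/-- The bound `if t ∈ s then 1 else 0` is sharper than `1` so that the induction on `s` closes:
the factor `x - X_t` occurs at most once. -/
theorem degreeOf_coeff_prod_le (F : Type*) [Field F] {n : ℕ} (t : Fin n) (s : Finset (Fin n))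
    (j : ℕ) :
    MvPolynomial.degreeOf t ((∏ a ∈ s, (Polynomial.X - Polynomial.C (MvPolynomial.X a) :
        Polynomial (MvPolynomial (Fin n) F))).coeff j) ≤ if t ∈ s then 1 else 0 := by
  induction s using Finset.induction_on generalizing j with
  | empty =>
    rw [Finset.prod_empty, Polynomial.coeff_one]
    split_ifs <;> simp
  | insert a s ha ih =>
    rw [Finset.prod_insert ha, sub_mul, Polynomial.coeff_sub, Polynomial.coeff_C_mul]
    refine (MvPolynomial.degreeOf_sub_le _ _ _).trans (max_le ?_ ?_)
    · cases j with
      | zero => simp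
      | succ j =>
        rw [Polynomial.coeff_X_mul]
        refine (ih j).trans ?_
        split_ifs <;> simp_all
    · refine (MvPolynomial.degreeOf_mul_le _ _ _).trans ?_
      have h := ih j
      rw [MvPolynomial.degreeOf_X]
      by_cases hta : t = a
      · subst hta
        simp_all
      · simpa [hta] using h

/-- The degree of `det A` in each variable `X_t` is at most `k - 1`. -/
theorem degreeOf_det_le (F : Type*) [Field F] (n k : ℕ)
    (hk : 1 ≤ k) (hkn : k ≤ n)
    (Z : Fin k → Finset (Fin n)) (hZ : ∀ i, (Z i).card = k - 1) (t : Fin n) :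
    MvPolynomial.degreeOf t (coeffMatrix F n k Z).det ≤ k - 1 := by
  obtain ⟨m, rfl⟩ := Nat.exists_eq_add_of_le' hk
  have hentry : ∀ i j, MvPolynomial.degreeOf t (coeffMatrix F n (m + 1) Z i j) ≤ 1 := by
    intro i j
    refine (degreeOf_coeff_prod_le F t (Z i) j).trans ?_
    split_ifs <;> simp
  have hlast : ∀ i, coeffMatrix F n (m + 1) Z i (Fin.last m) = 1 := by
    intro i
    have hm := Polynomial.monic_prod_X_sub_C
      (fun a : Fin n => (MvPolynomial.X a : MvPolynomial (Fin n) F)) (Z i)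
    have hd := Polynomial.natDegree_finsetProd_X_sub_C_eq_card (s := Z i)
      (fun a : Fin n => (MvPolynomial.X a : MvPolynomial (Fin n) F))
    rw [Polynomial.Monic, Polynomial.leadingCoeff, hd, hZ i] at hm
    simpa [coeffMatrix] using hm
  rw [Matrix.det_apply]
  refine (MvPolynomial.degreeOf_sum_le _ _ _).trans (Finset.sup_le fun σ _ => ?_)
  have hprod : MvPolynomial.degreeOf t (∏ j, coeffMatrix F n (m + 1) Z (σ j) j) ≤ m := by
    rw [Fin.prod_univ_castSucc, hlast, mul_one]
    refine (MvPolynomial.degreeOf_prod_le _ _ _).trans ?_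
    simpa using Finset.sum_le_sum fun j (_ : j ∈ Finset.univ) =>
      hentry (σ (Fin.castSucc j)) (Fin.castSucc j)
  rcases Int.units_eq_one_or (Equiv.Perm.sign σ) with h | h
  · simpa [h] using hprod
  · simpa [h, MvPolynomial.degreeOf_neg] using hprod
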